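/- arXiv:math/0006207 — 3 statements merged into one kernel-verified Lean document; each statement's English description precedes it below -/
import Mathlib

section
/- For all integers L, M, i, j with i ≥ 0, j ≥ 0, L ≥ i+j and M ≥ i+j, the identity \sum_{k=0}^{\min(i,j)} q^{(i-k)(j-k)} [M-i-j+k; k] [M-j; i-k] [L-i; j-k] = [L; j] [M-j; i] holds as an identity of polynomials in q, where [m; r] denotes the Gaussian binomial coefficient. -/
open Finset

/-- `(q)_n = (q;q)_n = ∏_{t=0}^{n-1} (1 - q^{t+1})` in `ℚ(q)`. -/
noncomputable def qPoch (n : ℕ) : RatFunc ℚ :=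
  ∏ t ∈ Finset.range n, (1 - (RatFunc.X : RatFunc ℚ) ^ (t + 1))

/-- The Gaussian (q-)binomial coefficient `[m; r] = (q)_m / ((q)_r (q)_{m-r})` for
`0 ≤ r ≤ m`, and `0` otherwise. -/
noncomputable def qbin (m r : ℤ) : RatFunc ℚ :=
  if 0 ≤ r ∧ r ≤ m then qPoch m.toNat / (qPoch r.toNat * qPoch (m - r).toNat) else 0

/-- Recursive Gaussian binomial. -/
noncomputable def gB : ℕ → ℕ → RatFunc ℚ
  | _, 0 => 1
  | 0, _ + 1 => 0
  | n + 1, k + 1 => gB n k + (RatFunc.X : RatFunc ℚ) ^ (k + 1) * gB n (k + 1)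

lemma gB_zero (n : ℕ) : gB n 0 = 1 := by cases n <;> rfl

lemma gB_succ (n k : ℕ) :
    gB (n + 1) (k + 1) = gB n k + (RatFunc.X : RatFunc ℚ) ^ (k + 1) * gB n (k + 1) := rfl

lemma gB_lt (n : ℕ) : ∀ k, n < k → gB n k = 0 := by
  induction n with
  | zero => intro k hk; obtain ⟨k, rfl⟩ := Nat.exists_eq_succ_of_ne_zero hk.ne'; rfl
  | succ n ih =>
    intro k hk
    obtain ⟨k, rfl⟩ := Nat.exists_eq_succ_of_ne_zero (by omega : k ≠ 0)
    rw [Nat.succ_eq_add_one, gB_succ, ih k (by omega), ih (k + 1) (by omega)]; simp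

lemma qPoch_zero : qPoch 0 = 1 := by simp [qPoch]

lemma qPoch_succ (n : ℕ) :
    qPoch (n + 1) = qPoch n * (1 - (RatFunc.X : RatFunc ℚ) ^ (n + 1)) := by
  simp [qPoch, Finset.prod_range_succ]

lemma qPoch_ne (n : ℕ) : qPoch n ≠ 0 := by
  unfold qPoch
  rw [Finset.prod_ne_zero_iff]
  intro t _ h
  have h1 : (RatFunc.X : RatFunc ℚ) ^ (t + 1) = 1 := (sub_eq_zero.mp h).symm
  rw [← RatFunc.algebraMap_X, ← map_pow, ← map_one (algebraMap (Polynomial ℚ) (RatFunc ℚ))] at h1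
  have h2 := RatFunc.algebraMap_injective ℚ h1
  have h3 := congrArg Polynomial.natDegree h2
  simp at h3

lemma gB_mul (n : ℕ) : ∀ a b, a + b = n → gB n a * (qPoch a * qPoch b) = qPoch n := by
  induction n with
  | zero =>
    intro a b h
    obtain ⟨rfl, rfl⟩ : a = 0 ∧ b = 0 := by omega
    simp [gB_zero, qPoch_zero]
  | succ n ih =>
    intro a b h
    rcases a with _ | a
    · obtain rfl : b = n + 1 := by omega
      simp [gB_zero, qPoch_zero]
    have h1 := ih a b (by omega)
    rcases b with _ | b
    · obtain rfl : a = n := by omega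
      rw [gB_succ, gB_lt a (a + 1) (by omega), qPoch_succ]
      linear_combination (1 - (RatFunc.X : RatFunc ℚ) ^ (a + 1)) * h1
    have h2 := ih (a + 1) b (by omega)
    obtain rfl : n = a + b + 1 := by omega
    rw [gB_succ, qPoch_succ (a + b + 1), qPoch_succ a]
    rw [qPoch_succ a] at h2
    rw [qPoch_succ b] at h1 ⊢
    linear_combination (1 - (RatFunc.X : RatFunc ℚ) ^ (a + 1)) * h1 +
      (RatFunc.X : RatFunc ℚ) ^ (a + 1) * (1 - (RatFunc.X : RatFunc ℚ) ^ (b + 1)) * h2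

lemma qbin_add (m r : ℤ) (a b : ℕ) (hr : r = a) (hm : m = a + b) :
    qbin m r = qPoch (a + b) / (qPoch a * qPoch b) := by
  subst hr hm
  rw [qbin, if_pos (by omega)]
  have h1 : ((a : ℤ) + b).toNat = a + b := by omega
  have h2 : ((a : ℤ) + b - a).toNat = b := by omega
  rw [h1, h2, Int.toNat_natCast]

lemma qbin_eq (n k : ℕ) : qbin n k = gB n k := by
  by_cases h : k ≤ n
  · obtain ⟨b, rfl⟩ := Nat.exists_eq_add_of_le h
    rw [qbin_add _ _ k b rfl (by push_cast; rfl), ← gB_mul _ k b rfl]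
    have := qPoch_ne k
    have := qPoch_ne b
    field_simp
  · rw [gB_lt n k (by omega), qbin, if_neg (by omega)]

/-- q-Vandermonde. -/
lemma qVand (N i : ℕ) : ∀ j : ℕ, ∑ k ∈ range (j + 1),
    (RatFunc.X : RatFunc ℚ) ^ (((i : ℤ) - k) * ((j : ℤ) - k)) * gB i k * gB N (j - k)
      = gB (N + i) j := by
  have hX : (RatFunc.X : RatFunc ℚ) ≠ 0 := RatFunc.X_ne_zero
  induction i with
  | zero =>
    intro j
    rw [Finset.sum_range_succ', Finset.sum_eq_zero]
    · simp [gB_zero]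
    · intro k _
      rw [gB_lt 0 (k + 1) (by omega)]; simp
  | succ i ih =>
    intro j
    rcases j with _ | j
    · simp [gB_zero]
    rw [← add_assoc, gB_succ, ← ih j, ← ih (j + 1), Finset.sum_range_succ',
      Finset.sum_range_succ' _ (j + 1), mul_add, ← add_assoc, Finset.mul_sum,
      ← Finset.sum_add_distrib]
    congr 1
    · refine Finset.sum_congr rfl fun k _ => ?_
      rw [gB_succ, Nat.add_sub_add_right]
      have e1 : (((i + 1 : ℕ) : ℤ) - ((k + 1 : ℕ) : ℤ)) * (((j + 1 : ℕ) : ℤ) - ((k + 1 : ℕ) : ℤ))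
          = ((i : ℤ) - k) * ((j : ℤ) - k) := by push_cast; ring
      have e2 : (RatFunc.X : RatFunc ℚ) ^ (((i : ℤ) - k) * ((j : ℤ) - k)) *
          (RatFunc.X : RatFunc ℚ) ^ (k + 1) = (RatFunc.X : RatFunc ℚ) ^ (j + 1) *
          (RatFunc.X : RatFunc ℚ) ^
            (((i : ℤ) - ((k + 1 : ℕ) : ℤ)) * (((j + 1 : ℕ) : ℤ) - ((k + 1 : ℕ) : ℤ))) := by
        rw [← zpow_natCast, ← zpow_natCast, ← zpow_add₀ hX, ← zpow_add₀ hX]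
        congr 1; push_cast; ring
      rw [e1]
      linear_combination gB i (k + 1) * gB N (j - k) * e2
    · have e2 : (RatFunc.X : RatFunc ℚ) ^
          ((((i + 1 : ℕ) : ℤ) - ((0 : ℕ) : ℤ)) * (((j + 1 : ℕ) : ℤ) - ((0 : ℕ) : ℤ))) =
          (RatFunc.X : RatFunc ℚ) ^ (j + 1) * (RatFunc.X : RatFunc ℚ) ^
            (((i : ℤ) - ((0 : ℕ) : ℤ)) * (((j + 1 : ℕ) : ℤ) - ((0 : ℕ) : ℤ))) := by
        rw [← zpow_natCast, ← zpow_add₀ hX]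
        congr 1; push_cast; ring
      rw [e2, gB_zero, gB_zero]; ring

/-- The double bounded key identity (2.1) for `i, j ≥ 0`, `L, M ≥ i + j`:
`∑_{k=0}^{min(i,j)} q^{(i-k)(j-k)} [M-i-j+k; k] [M-j; i-k] [L-i; j-k] = [L; j] [M-j; i]`. -/
theorem double_bounded_key_identity_polynomial (L M i j : ℤ)
    (hi : 0 ≤ i) (hj : 0 ≤ j) (hL : i + j ≤ L) (hM : i + j ≤ M) :
    ∑ k ∈ Finset.Icc (0 : ℤ) (min i j),
      (RatFunc.X : RatFunc ℚ) ^ ((i - k) * (j - k)) *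
        qbin (M - i - j + k) k * qbin (M - j) (i - k) * qbin (L - i) (j - k) =
    qbin L j * qbin (M - j) i := by
  lift i to ℕ using hi
  lift j to ℕ using hj
  obtain ⟨N, rfl⟩ : ∃ N : ℕ, L = N + i := ⟨(L - i).toNat, by omega⟩
  obtain ⟨m, rfl⟩ : ∃ m : ℕ, M = i + j + m := ⟨(M - i - j).toNat, by omega⟩
  have hR : qbin ((N : ℤ) + i) j = gB (N + i) j := by rw [← qbin_eq]; push_cast; rfl
  rw [hR, ← qVand N i j, Finset.sum_mul]
  symm
  have hsub : range (min i j + 1) ⊆ range (j + 1) := by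
    intro k; simp only [Finset.mem_range]; omega
  rw [← Finset.sum_subset hsub]
  · refine Finset.sum_bij (fun (k : ℕ) _ => (k : ℤ)) ?_ ?_ ?_ ?_
    · intro k hk; simp only [Finset.mem_range, Finset.mem_Icc] at *; omega
    · intro a _ b _ h; exact_mod_cast h
    · intro b hb
      simp only [Finset.mem_Icc] at hb
      exact ⟨b.toNat, by simp only [Finset.mem_range]; omega, by omega⟩
    · intro k hk
      simp only [Finset.mem_range] at hk
      obtain ⟨c, rfl⟩ : ∃ c, i = k + c := ⟨i - k, by omega⟩
      obtain ⟨d, rfl⟩ : ∃ d, j = k + d := ⟨j - k, by omega⟩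
      have h1 : ((N : ℤ) + ((k + c : ℕ) : ℤ) - ((k + c : ℕ) : ℤ)) = (N : ℤ) := by ring
      have h2 : (((k + d : ℕ) : ℤ) - (k : ℤ)) = (d : ℤ) := by push_cast; ring
      have h3 : k + d - k = d := by omega
      rw [h1, h2, h3, qbin_eq N d, ← qbin_eq (k + c) k,
        qbin_add ((k + c : ℕ) : ℤ) k k c rfl (by push_cast; rfl),
        qbin_add _ ((k + c : ℕ) : ℤ) (k + c) m rfl (by push_cast; ring),
        qbin_add _ (k : ℤ) k m rfl (by push_cast; ring),
        qbin_add _ (((k + c : ℕ) : ℤ) - k) c (k + m) (by push_cast; ring) (by push_cast; ring)]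
      have e : c + (k + m) = k + c + m := by ring
      rw [e]
      have := qPoch_ne k
      have := qPoch_ne c
      have := qPoch_ne m
      have := qPoch_ne (k + c)
      have := qPoch_ne (k + m)
      field_simp
  · intro k hk hk'
    simp only [Finset.mem_range] at hk hk'
    rw [gB_lt i k (by omega)]; simp
end

section
/- For all integers i, j ≥ 0, the identity \sum_{k=0}^{\min(i,j)} q^{T_{i+j-k} + T_k} / ((q)_{i-k} (q)_{j-k} (q)_k) = q^{T_i + T_j} / ((q)_i (q)_j) holds as an identity of formal power series in q. (This is the key identity underlying Schur's theorem: multiplying by A^i B^j and summing over i, j ≥ 0 yields ∏_{m=1}^{∞}(1+Aq^m)(1+Bq^m).) -/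
open Finset

/-- `(q)_n = (q;q)_n = ∏_{t=0}^{n-1} (1 - q^{t+1})` as a formal power series over `ℚ`. -/
noncomputable def qPochPS (n : ℕ) : PowerSeries ℚ :=
  ∏ t ∈ Finset.range n, (1 - (PowerSeries.X : PowerSeries ℚ) ^ (t + 1))

/-- `T n = n(n+1)/2`, the n-th triangular number. -/
def tri (n : ℕ) : ℕ := n * (n + 1) / 2

theorem qPochPS_inv_step (n : ℕ) :
    (1 - (PowerSeries.X : PowerSeries ℚ) ^ (n + 1)) * (qPochPS (n + 1))⁻¹ = (qPochPS n)⁻¹ := by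
  have h1 : PowerSeries.constantCoeff (1 - (PowerSeries.X : PowerSeries ℚ) ^ (n + 1)) ≠ 0 := by
    simp
  have h2 : qPochPS (n + 1) = qPochPS n * (1 - (PowerSeries.X : PowerSeries ℚ) ^ (n + 1)) := by
    simp [qPochPS, Finset.prod_range_succ]
  rw [h2, PowerSeries.mul_inv_rev, ← mul_assoc, PowerSeries.mul_inv_cancel _ h1, one_mul]

/-- `1/(q)_{j-k}`, or zero when `j < k`. -/
noncomputable def invTrunc (j k : ℕ) : PowerSeries ℚ := if k ≤ j then (qPochPS (j - k))⁻¹ else 0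

noncomputable def schurTerm (i j k : ℕ) : PowerSeries ℚ :=
  (PowerSeries.X : PowerSeries ℚ) ^ ((i - k) * (j - k)) *
    (qPochPS (i - k))⁻¹ * invTrunc j k * (qPochPS k)⁻¹

theorem schurTerm_first (i j k : ℕ) (hk : k ≤ i) :
    (1 - (PowerSeries.X : PowerSeries ℚ) ^ (i + 1 - k)) * schurTerm (i + 1) j k =
      PowerSeries.X ^ (j - k) * schurTerm i j k := by
  obtain ⟨a, rfl⟩ := Nat.exists_eq_add_of_le hk
  have e1 : k + a + 1 - k = a + 1 := by omega
  have e2 : k + a - k = a := by omega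
  simp only [schurTerm, e1, e2]
  rw [← qPochPS_inv_step a]
  ring

theorem schurTerm_second (i j k : ℕ) :
    (PowerSeries.X : PowerSeries ℚ) ^ (i - k) * (1 - PowerSeries.X ^ (k + 1)) *
      schurTerm (i + 1) j (k + 1) =
      (1 - PowerSeries.X ^ (j - k)) * schurTerm i j k := by
  have e1 : i + 1 - (k + 1) = i - k := by omega
  simp only [schurTerm, e1]
  rw [← qPochPS_inv_step k]
  rcases Nat.lt_trichotomy k j with h | h | h
  · obtain ⟨b, rfl⟩ := Nat.exists_eq_add_of_le (Nat.succ_le_of_lt h)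
    have e2 : k.succ + b - (k + 1) = b := by omega
    have e3 : k.succ + b - k = b + 1 := by omega
    have h1 : k + 1 ≤ k.succ + b := by omega
    have h2 : k ≤ k.succ + b := by omega
    simp only [invTrunc, h1, h2, if_true, e2, e3]
    rw [← qPochPS_inv_step b]
    ring
  · subst h
    simp [invTrunc]
  · have h1 : ¬ k + 1 ≤ j := by omega
    have h2 : ¬ k ≤ j := by omega
    simp [invTrunc, h1, h2]

theorem schurTerm_sum (i j : ℕ) :
    ∑ k ∈ Finset.range (i + 1), schurTerm i j k = (qPochPS i)⁻¹ * (qPochPS j)⁻¹ := by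
  induction i with
  | zero => simp [schurTerm, invTrunc, qPochPS]
  | succ i ih =>
    have h1 : (1 - (PowerSeries.X : PowerSeries ℚ) ^ (i + 1)) ≠ 0 := by
      intro h
      have := congrArg PowerSeries.constantCoeff h
      simp at this
    apply mul_left_cancel₀ h1
    rw [← mul_assoc, qPochPS_inv_step, ← ih, Finset.mul_sum]
    have hs : ∀ k ∈ Finset.range (i + 1 + 1),
        (1 - (PowerSeries.X : PowerSeries ℚ) ^ (i + 1)) * schurTerm (i + 1) j k =
        (1 - PowerSeries.X ^ (i + 1 - k)) * schurTerm (i + 1) j k +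
        PowerSeries.X ^ (i + 1 - k) * (1 - PowerSeries.X ^ k) * schurTerm (i + 1) j k := by
      intro k hk
      have hk' : i + 1 = (i + 1 - k) + k := by
        have := Finset.mem_range.1 hk
        omega
      have hp : (PowerSeries.X : PowerSeries ℚ) ^ (i + 1) =
          PowerSeries.X ^ (i + 1 - k) * PowerSeries.X ^ k := by
        rw [← pow_add, ← hk']
      rw [hp]
      ring
    rw [Finset.sum_congr rfl hs, Finset.sum_add_distrib, Finset.sum_range_succ,
      Finset.sum_range_succ' (fun k => (PowerSeries.X : PowerSeries ℚ) ^ (i + 1 - k) *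
        (1 - PowerSeries.X ^ k) * schurTerm (i + 1) j k)]
    simp only [Nat.sub_self, pow_zero, sub_self, zero_mul, mul_zero, add_zero]
    rw [← Finset.sum_add_distrib]
    apply Finset.sum_congr rfl
    intro k hk
    have hk' : k ≤ i := Nat.lt_succ_iff.1 (Finset.mem_range.1 hk)
    rw [schurTerm_first i j k hk', Nat.add_sub_add_right, schurTerm_second]
    ring

theorem two_mul_tri (n : ℕ) : 2 * tri n = n * (n + 1) :=
  Nat.mul_div_cancel' (Nat.even_mul_succ_self n).two_dvd

theorem tri_exponent (i j k : ℕ) (hi : k ≤ i) (hj : k ≤ j) :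
    tri (i + j - k) + tri k = tri i + tri j + (i - k) * (j - k) := by
  obtain ⟨a, rfl⟩ := Nat.exists_eq_add_of_le hi
  obtain ⟨b, rfl⟩ := Nat.exists_eq_add_of_le hj
  have e : k + a + (k + b) - k = k + a + b := by omega
  rw [e, Nat.add_sub_cancel_left, Nat.add_sub_cancel_left]
  have h1 := two_mul_tri (k + a + b)
  have h2 := two_mul_tri k
  have h3 := two_mul_tri (k + a)
  have h4 := two_mul_tri (k + b)
  nlinarith

/-- The key identity (1.1)/(2.6) underlying Schur's theorem: for `i, j ≥ 0`,
`∑_{k=0}^{min(i,j)} q^{T_{i+j-k}+T_k} / ((q)_{i-k} (q)_{j-k} (q)_k)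
  = q^{T_i+T_j} / ((q)_i (q)_j)` as formal power series in `q`. -/
theorem schur_key_identity (i j : ℕ) :
    ∑ k ∈ Finset.range (min i j + 1),
      (PowerSeries.X : PowerSeries ℚ) ^ (tri (i + j - k) + tri k) *
        (qPochPS (i - k))⁻¹ * (qPochPS (j - k))⁻¹ * (qPochPS k)⁻¹ =
    (PowerSeries.X : PowerSeries ℚ) ^ (tri i + tri j) * ((qPochPS i)⁻¹ * (qPochPS j)⁻¹) := by
  rw [← schurTerm_sum, Finset.mul_sum]
  have hsub : Finset.range (min i j + 1) ⊆ Finset.range (i + 1) := by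
    intro x hx
    simp only [Finset.mem_range] at *
    omega
  rw [← Finset.sum_subset hsub]
  · apply Finset.sum_congr rfl
    intro k hk
    have hk' := Finset.mem_range.1 hk
    have hi : k ≤ i := by omega
    have hj : k ≤ j := by omega
    rw [tri_exponent i j k hi hj, pow_add]
    simp only [schurTerm, invTrunc, hj, if_true]
    ring
  · intro k h1 h2
    simp only [Finset.mem_range] at h1 h2
    have hj : ¬ k ≤ j := by omega
    simp [schurTerm, invTrunc, hj]
end

section
/- For every integer L ≥ 1, \sum_{π} A^{ν_1(π) + ν_0(π)} B^{ν_2(π) + ν_0(π)} q^{σ(π)} = \sum_{τ ∈ ℤ} A^{τ} q^{τ(3τ-1)/2} \left( \begin{smallmatrix} L; q^3 \\ τ \end{smallmatrix} \right)_{c = AB}, where the left sum is over all partitions π into parts ≤ 3L−1 such that any two consecutive parts differ by at least 3, with difference strictly greater than 3 whenever the larger part is a multiple of 3; here σ(π) is the sum of the parts of π and ν_r(π) is the number of parts of π congruent to r modulo 3. This is an identity of polynomials in A, B, q. -/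
open Finset

/-- The field `ℚ(A, B, q)` of rational functions in three variables. -/
abbrev K3 := FractionRing (MvPolynomial (Fin 3) ℚ)

/-- The variable `A`. -/
noncomputable def Av : K3 := algebraMap (MvPolynomial (Fin 3) ℚ) K3 (MvPolynomial.X 0)
/-- The variable `B`. -/
noncomputable def Bv : K3 := algebraMap (MvPolynomial (Fin 3) ℚ) K3 (MvPolynomial.X 1)
/-- The variable `q`. -/
noncomputable def qv : K3 := algebraMap (MvPolynomial (Fin 3) ℚ) K3 (MvPolynomial.X 2)

/-- `(x; x)_n = ∏_{t=0}^{n-1} (1 - x^{t+1})`. -/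
noncomputable def pochK (x : K3) (n : ℕ) : K3 := ∏ t ∈ Finset.range n, (1 - x ^ (t + 1))

/-- The q-multinomial coefficient of order 3 with base `x`, set to `0` if any lower
argument is negative. -/
noncomputable def trinK (x : K3) (u v w : ℤ) : K3 :=
  if 0 ≤ u ∧ 0 ≤ v ∧ 0 ≤ w then
    pochK x (u + v + w).toNat / (pochK x u.toNat * pochK x v.toNat * pochK x w.toNat) else 0

/-- The Andrews–Baxter generalized q-trinomial coefficient with base `x` and
parameter `c`:  `(L; x; τ)_c = ∑_j c^j x^{j(j+τ)} [L; j+τ, j, L-2j-τ]_x`. -/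
noncomputable def qTrinomialAB (x c : K3) (L : ℕ) (τ : ℤ) : K3 :=
  ∑ᶠ (j : ℤ), c ^ j * x ^ (j * (j + τ)) * trinK x (j + τ) j ((L : ℤ) - 2 * j - τ)

/-- Number of parts of `π` congruent to `r` mod 3. -/
def nu3 (r : ℕ) (π : List ℕ) : ℕ := (π.filter (fun x => x % 3 = r)).length


/-- Schur gap relation. -/
def schurRel (x y : ℕ) : Prop := y + 3 ≤ x ∧ (x % 3 = 0 → y + 3 < x)

def schurSet (m : ℕ) : Set (List ℕ) :=
  {π | (∀ x ∈ π, 0 < x ∧ x ≤ m) ∧ π.Pairwise schurRel}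

noncomputable def schurWt (π : List ℕ) : K3 :=
  Av ^ (nu3 1 π + nu3 0 π) * Bv ^ (nu3 2 π + nu3 0 π) * qv ^ π.sum

noncomputable def schurG (m : ℕ) : K3 := ∑ᶠ π ∈ schurSet m, schurWt π

lemma schurSet_zero : schurSet 0 = {[]} := by
  ext π
  simp only [schurSet, Set.mem_setOf_eq, Set.mem_singleton_iff]
  constructor
  · rintro ⟨h, -⟩
    cases π with
    | nil => rfl
    | cons a l => have := h a (by simp); omega
  · rintro rfl; simp

lemma schurSet_succ (m k : ℕ) (hk : k = if (m + 1) % 3 = 0 then m - 3 else m - 2) :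
    schurSet (m + 1) = schurSet m ∪ (List.cons (m + 1)) '' schurSet k := by
  ext π
  simp only [schurSet, Set.mem_setOf_eq, Set.mem_union, Set.mem_image]
  constructor
  · rintro ⟨h, hp⟩
    cases π with
    | nil => left; simp
    | cons a l =>
      rw [List.pairwise_cons] at hp
      obtain ⟨hp1, hp2⟩ := hp
      have ha := h a (by simp)
      by_cases hm : a = m + 1
      · right
        subst hm
        refine ⟨l, ⟨fun x hx => ?_, hp2⟩, rfl⟩
        have h1 := h x (by simp [hx])
        have h2 := hp1 x hx
        unfold schurRel at h2
        split_ifs at hk <;> omega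
      · left
        refine ⟨fun x hx => ?_, by rw [List.pairwise_cons]; exact ⟨hp1, hp2⟩⟩
        rcases List.mem_cons.1 hx with rfl | hx
        · omega
        · have h1 := h x (by simp [hx])
          have h2 := hp1 x hx
          unfold schurRel at h2
          omega
  · rintro (⟨h, hp⟩ | ⟨l, ⟨h, hp⟩, rfl⟩)
    · exact ⟨fun x hx => by have := h x hx; omega, hp⟩
    · refine ⟨fun x hx => ?_, ?_⟩
      · rcases List.mem_cons.1 hx with rfl | hx
        · omega
        · have := h x hx
          split_ifs at hk <;> omega
      · rw [List.pairwise_cons]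
        refine ⟨fun x hx => ?_, hp⟩
        have := h x hx
        unfold schurRel
        split_ifs at hk <;> omega

lemma schurSet_finite (m : ℕ) : (schurSet m).Finite := by
  induction m using Nat.strong_induction_on with
  | _ m ih =>
    cases m with
    | zero => rw [schurSet_zero]; exact Set.finite_singleton _
    | succ m =>
      rw [schurSet_succ m _ rfl]
      refine (ih m (by omega)).union ((ih _ ?_).image _)
      split_ifs <;> omega

lemma schurG_zero : schurG 0 = 1 := by
  simp [schurG, schurSet_zero, schurWt, nu3]

lemma schurG_succ (m k : ℕ) (w : K3) (hk : k = if (m + 1) % 3 = 0 then m - 3 else m - 2)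
    (hw : ∀ l, schurWt ((m + 1) :: l) = w * schurWt l) :
    schurG (m + 1) = schurG m + w * schurG k := by
  unfold schurG
  rw [schurSet_succ m k hk, finsum_mem_union _ (schurSet_finite m) ((schurSet_finite k).image _),
    finsum_mem_image (fun a _ b _ h => by simpa using h)]
  · simp only [hw]
    rw [← smul_eq_mul, smul_finsum_mem (schurSet_finite k)]
    rfl
  · rw [Set.disjoint_left]
    rintro π ⟨h, -⟩ ⟨l, -, rfl⟩
    have := h (m + 1) (by simp)
    omega

lemma schurWt_1 (n : ℕ) (l : List ℕ) :
    schurWt ((3 * n + 1) :: l) = Av * qv ^ (3 * n + 1) * schurWt l := by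
  have h : (3 * n + 1) % 3 = 1 := by omega
  simp [schurWt, nu3, List.filter_cons, h, pow_add]
  ring

lemma schurWt_2 (n : ℕ) (l : List ℕ) :
    schurWt ((3 * n + 1 + 1) :: l) = Bv * qv ^ (3 * n + 2) * schurWt l := by
  have h : (3 * n + 1 + 1) % 3 = 2 := by omega
  simp [schurWt, nu3, List.filter_cons, h, pow_add]
  ring

lemma schurWt_0 (n : ℕ) (l : List ℕ) :
    schurWt ((3 * n + 2 + 1) :: l) = Av * Bv * qv ^ (3 * n + 3) * schurWt l := by
  have h : (3 * n + 2 + 1) % 3 = 0 := by omega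
  simp [schurWt, nu3, List.filter_cons, h, pow_add]
  ring

lemma schurG_1 (n : ℕ) : schurG (3 * n + 1) =
    schurG (3 * n) + Av * qv ^ (3 * n + 1) * schurG (3 * n - 2) :=
  schurG_succ _ _ _ (by split_ifs <;> omega) (schurWt_1 n)

lemma schurG_2 (n : ℕ) : schurG (3 * n + 2) =
    schurG (3 * n + 1) + Bv * qv ^ (3 * n + 2) * schurG (3 * n - 1) :=
  schurG_succ _ _ _ (by split_ifs <;> omega) (schurWt_2 n)

lemma schurG_3 (n : ℕ) : schurG (3 * n + 3) =
    schurG (3 * n + 2) + Av * Bv * qv ^ (3 * n + 3) * schurG (3 * n - 1) :=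
  schurG_succ _ _ _ (by split_ifs <;> omega) (schurWt_0 n)

lemma schurG_rec (n : ℕ) : schurG (3 * (n + 2) - 1) =
    (1 + Av * qv ^ (3 * n + 4) + Bv * qv ^ (3 * n + 5)) * schurG (3 * (n + 1) - 1) +
    Av * Bv * qv ^ (3 * n + 3) * (1 - qv ^ (3 * n + 3)) * schurG (3 * n - 1) := by
  have h1 := schurG_2 (n + 1)
  have h2 := schurG_1 (n + 1)
  have h3 := schurG_3 n
  have h4 := schurG_2 n
  have e1 : 3 * (n + 2) - 1 = 3 * (n + 1) + 2 := by omega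
  have e2 : 3 * (n + 1) - 1 = 3 * n + 2 := by omega
  have e3 : 3 * (n + 1) - 2 = 3 * n + 1 := by omega
  have e4 : 3 * (n + 1) = 3 * n + 3 := by omega
  rw [e2] at h1
  rw [e3] at h2
  rw [e1, e2, h1, h2, e4, h3, h4]
  ring

/-- Reciprocal Pochhammer, zero at negative arguments. -/
noncomputable def ipoch (x : K3) (u : ℤ) : K3 := if 0 ≤ u then (pochK x u.toNat)⁻¹ else 0

lemma qv_ne_zero : qv ≠ 0 := by
  unfold qv
  rw [Ne, FaithfulSMul.algebraMap_eq_zero_iff]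
  exact MvPolynomial.X_ne_zero _

lemma Av_ne_zero : Av ≠ 0 := by
  unfold Av
  rw [Ne, FaithfulSMul.algebraMap_eq_zero_iff]
  exact MvPolynomial.X_ne_zero _

lemma Bv_ne_zero : Bv ≠ 0 := by
  unfold Bv
  rw [Ne, FaithfulSMul.algebraMap_eq_zero_iff]
  exact MvPolynomial.X_ne_zero _

lemma one_sub_qv_pow (n : ℕ) (hn : n ≠ 0) : (1 : K3) - qv ^ n ≠ 0 := by
  intro h
  have h1 : qv ^ n = 1 := (sub_eq_zero.1 h).symm
  unfold qv at h1
  rw [← map_pow, FaithfulSMul.algebraMap_eq_one_iff] at h1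
  have h2 := congrArg MvPolynomial.totalDegree h1
  rw [MvPolynomial.totalDegree_X_pow, MvPolynomial.totalDegree_one] at h2
  exact hn h2

lemma pochK_ne_zero (n : ℕ) : pochK (qv ^ 3) n ≠ 0 := by
  unfold pochK
  rw [Finset.prod_ne_zero_iff]
  intro t _
  rw [← pow_mul]
  exact one_sub_qv_pow _ (by omega)

lemma pochK_succ (x : K3) (n : ℕ) : pochK x (n + 1) = pochK x n * (1 - x ^ (n + 1)) := by
  unfold pochK
  rw [Finset.prod_range_succ]

lemma ipoch_pred (u : ℤ) :
    ipoch (qv ^ 3) (u - 1) = (1 - (qv ^ 3) ^ u) * ipoch (qv ^ 3) u := by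
  unfold ipoch
  rcases lt_trichotomy u 0 with h | h | h
  · rw [if_neg (by omega), if_neg (by omega)]; simp
  · subst h; simp
  · obtain ⟨n, rfl⟩ : ∃ n : ℕ, u = (n : ℤ) + 1 := ⟨(u - 1).toNat, by omega⟩
    rw [if_pos (by omega), if_pos (by omega)]
    have e1 : ((n : ℤ) + 1 - 1).toNat = n := by omega
    have e2 : ((n : ℤ) + 1).toNat = n + 1 := by omega
    rw [e1, e2]
    have h1 := pochK_ne_zero n
    have h2 := pochK_ne_zero (n + 1)
    have h3 : (qv ^ 3) ^ ((n : ℤ) + 1) = (qv ^ 3) ^ (n + 1) := by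
      rw [← zpow_natCast]; push_cast; rfl
    rw [h3]
    have h4 := pochK_succ (qv ^ 3) n
    rw [h4, mul_inv]
    have h5 : (1 : K3) - (qv ^ 3) ^ (n + 1) ≠ 0 := by
      rw [← pow_mul]; exact one_sub_qv_pow _ (by omega)
    field_simp

lemma trinK_eq (n : ℕ) (u v w : ℤ) (h : u + v + w = n) :
    trinK (qv ^ 3) u v w =
      pochK (qv ^ 3) n * (ipoch (qv ^ 3) u * ipoch (qv ^ 3) v * ipoch (qv ^ 3) w) := by
  unfold trinK ipoch
  rw [h]
  by_cases hu : 0 ≤ u <;> by_cases hv : 0 ≤ v <;> by_cases hw : 0 ≤ w <;>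
    simp [hu, hv, hw, div_eq_mul_inv, mul_comm, mul_left_comm, mul_assoc]

/-- The exponent of q. -/
def ex (u v : ℤ) : ℤ := u * (3 * u - 1) / 2 + v * (3 * v + 1) / 2

lemma even_ex (u : ℤ) : ∃ k, u * (3 * u - 1) = 2 * k := by
  rcases Int.even_or_odd' u with ⟨k, rfl | rfl⟩
  · exact ⟨k * (3 * (2 * k) - 1), by ring⟩
  · exact ⟨(2 * k + 1) * (3 * k + 1), by ring⟩

lemma two_ex (u v : ℤ) : 2 * ex u v = u * (3 * u - 1) + v * (3 * v + 1) := by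
  obtain ⟨k, hk⟩ := even_ex u
  obtain ⟨l, hl⟩ := even_ex (-v)
  have hl' : v * (3 * v + 1) = 2 * l := by rw [← hl]; ring
  unfold ex
  rw [hk, hl']
  omega

noncomputable def F (n : ℕ) (p : ℤ × ℤ) : K3 :=
  Av ^ p.1 * Bv ^ p.2 * qv ^ (ex p.1 p.2) *
    (pochK (qv ^ 3) n * (ipoch (qv ^ 3) p.1 * ipoch (qv ^ 3) p.2 * ipoch (qv ^ 3) (n - p.1 - p.2)))

lemma ipoch_neg (x : K3) (u : ℤ) (h : u < 0) : ipoch x u = 0 := if_neg (by omega)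

lemma F_support (n : ℕ) : (Function.support (F n)).Finite := by
  apply Set.Finite.subset (Set.finite_Icc ((0 : ℤ), (0 : ℤ)) ((n : ℤ), (n : ℤ)))
  rintro ⟨u, v⟩ h
  by_contra hc
  apply h
  unfold F
  simp only [Set.mem_Icc, Prod.mk_le_mk] at hc ⊢
  by_cases hu : u < 0
  · rw [ipoch_neg _ u hu]; ring
  by_cases hv : v < 0
  · rw [ipoch_neg _ v hv]; ring
  rw [ipoch_neg _ ((n : ℤ) - u - v) (by omega)]; ring

lemma F_rec (n : ℕ) (u v : ℤ) : F (n + 2) (u, v) =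
    F (n + 1) (u, v) + Av * qv ^ (3 * n + 4) * F (n + 1) (u - 1, v)
    + Bv * qv ^ (3 * n + 5) * F (n + 1) (u, v - 1)
    + Av * Bv * qv ^ (3 * n + 3) * (1 - qv ^ (3 * n + 3)) * F n (u - 1, v - 1) := by
  have hq := qv_ne_zero
  have hA := Av_ne_zero
  have hB := Bv_ne_zero
  obtain ⟨w, hw⟩ : ∃ w : ℤ, w = (n : ℤ) + 2 - u - v := ⟨_, rfl⟩
  unfold F
  simp only [ipoch_pred]
  have e1 : ((n + 2 : ℕ) : ℤ) - u - v = w := by push_cast; omega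
  have e2 : ((n + 1 : ℕ) : ℤ) - u - v = w - 1 := by push_cast; omega
  have e3 : ((n + 1 : ℕ) : ℤ) - (u - 1) - v = w := by push_cast; omega
  have e4 : ((n + 1 : ℕ) : ℤ) - u - (v - 1) = w := by push_cast; omega
  have e5 : (n : ℤ) - (u - 1) - (v - 1) = w := by omega
  rw [e1, e2, e3, e4, e5, ipoch_pred, pochK_succ _ (n + 1), pochK_succ _ n]
  have x1 : ex (u - 1) v = ex u v - 3 * u + 2 := by
    have := two_ex (u - 1) v; have := two_ex u v; linarith
  have x2 : ex u (v - 1) = ex u v - 3 * v + 1 := by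
    have := two_ex u (v - 1); have := two_ex u v; linarith
  have x3 : ex (u - 1) (v - 1) = ex u v - 3 * u - 3 * v + 3 := by
    have := two_ex (u - 1) (v - 1); have := two_ex u v; linarith
  rw [x1, x2, x3]
  generalize ex u v = e
  have a1 : Av ^ (u - 1) = Av ^ u / Av := zpow_sub_one₀ hA u
  have b1 : Bv ^ (v - 1) = Bv ^ v / Bv := zpow_sub_one₀ hB v
  have cu : ((qv : K3) ^ 3) ^ u = qv ^ (3 * u) := by
    rw [zpow_mul]; norm_cast
  have cv : ((qv : K3) ^ 3) ^ v = qv ^ (3 * v) := by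
    rw [zpow_mul]; norm_cast
  have cw : ((qv : K3) ^ 3) ^ w = qv ^ (3 * w) := by
    rw [zpow_mul]; norm_cast
  have nn : (qv : K3) ^ (3 * n + 6) = qv ^ (3 * u) * qv ^ (3 * v) * qv ^ (3 * w) := by
    rw [← zpow_add₀ hq, ← zpow_add₀ hq, ← zpow_natCast]
    congr 1; push_cast; omega
  have n4 : qv ^ (3 * n + 4) * qv ^ (e - 3 * u + 2) = qv ^ e * qv ^ (3 * v) * qv ^ (3 * w) := by
    rw [← zpow_natCast, ← zpow_add₀ hq, ← zpow_add₀ hq, ← zpow_add₀ hq]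
    congr 1; push_cast; omega
  have n5 : qv ^ (3 * n + 5) * qv ^ (e - 3 * v + 1) = qv ^ e * qv ^ (3 * u) * qv ^ (3 * w) := by
    rw [← zpow_natCast, ← zpow_add₀ hq, ← zpow_add₀ hq, ← zpow_add₀ hq]
    congr 1; push_cast; omega
  have n3 : qv ^ (3 * n + 3) * qv ^ (e - 3 * u - 3 * v + 3) = qv ^ e * qv ^ (3 * w) := by
    rw [← zpow_natCast, ← zpow_add₀ hq, ← zpow_add₀ hq]
    congr 1; push_cast; omega
  have p1 : (qv ^ 3) ^ (n + 1 + 1) = qv ^ (3 * n + 6) := by rw [← pow_mul]; congr 1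
  have p2 : (qv ^ 3) ^ (n + 1) = qv ^ (3 * n + 3) := by rw [← pow_mul]; congr 1
  rw [a1, b1, cu, cv, cw, p1, p2, nn]
  generalize pochK (qv ^ 3) n = P
  generalize ipoch (qv ^ 3) u = I
  generalize ipoch (qv ^ 3) v = J
  generalize ipoch (qv ^ 3) w = M
  have hA' : Av * (Av ^ u / Av) = Av ^ u := by field_simp
  have hB' : Bv * (Bv ^ v / Bv) = Bv ^ v := by field_simp
  generalize Av ^ u / Av = Aa at *
  generalize Bv ^ v / Bv = Bb at *
  generalize qv ^ (e - 3 * u + 2) = E1 at *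
  generalize qv ^ (e - 3 * v + 1) = E2 at *
  generalize qv ^ (e - 3 * u - 3 * v + 3) = E3 at *
  generalize qv ^ (3 * n + 3) = N3 at *
  generalize qv ^ (3 * n + 4) = N4 at *
  generalize qv ^ (3 * n + 5) = N5 at *
  generalize qv ^ (3 * u) = x at *
  generalize qv ^ (3 * v) = y at *
  generalize qv ^ (3 * w) = z at *
  generalize qv ^ e = E at *
  rw [← hA', ← hB']
  linear_combination
    (-(Av * Aa * Bv * Bb * P * (1 - N3) * (1 - x) * I * J * M)) * n4
    + (-(Av * Aa * Bv * Bb * P * (1 - N3) * (1 - y) * I * J * M)) * n5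
    + (-(Av * Aa * Bv * Bb * P * (1 - N3) * (1 - x) * (1 - y) * I * J * M)) * n3

noncomputable def R (n : ℕ) : K3 := ∑ᶠ p : ℤ × ℤ, F n p

lemma shift_finsum (f : ℤ × ℤ → K3) (a b : ℤ) :
    ∑ᶠ p : ℤ × ℤ, f (p.1 - a, p.2 - b) = ∑ᶠ p, f p :=
  finsum_comp_equiv ((Equiv.subRight a).prodCongr (Equiv.subRight b)) (f := f)

lemma shift_support (f : ℤ × ℤ → K3) (hf : (Function.support f).Finite) (c : K3) (a b : ℤ) :
    (Function.support (fun p : ℤ × ℤ => c * f (p.1 - a, p.2 - b))).Finite := by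
  have h : (Function.support (fun p : ℤ × ℤ => f (p.1 - a, p.2 - b))).Finite :=
    hf.preimage (f := (Equiv.subRight a).prodCongr (Equiv.subRight b))
      (Equiv.injective _).injOn
  apply h.subset
  intro p hp hp'
  exact hp (by simp only at hp' ⊢; rw [hp', mul_zero])

lemma R_rec (n : ℕ) : R (n + 2) =
    (1 + Av * qv ^ (3 * n + 4) + Bv * qv ^ (3 * n + 5)) * R (n + 1) +
    Av * Bv * qv ^ (3 * n + 3) * (1 - qv ^ (3 * n + 3)) * R n := by
  have key : ∀ p : ℤ × ℤ, F (n + 2) p = 1 * F (n + 1) (p.1 - 0, p.2 - 0)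
    + Av * qv ^ (3 * n + 4) * F (n + 1) (p.1 - 1, p.2 - 0)
    + Bv * qv ^ (3 * n + 5) * F (n + 1) (p.1 - 0, p.2 - 1)
    + Av * Bv * qv ^ (3 * n + 3) * (1 - qv ^ (3 * n + 3)) * F n (p.1 - 1, p.2 - 1) := by
    rintro ⟨u, v⟩
    simp only [sub_zero, one_mul]
    exact F_rec n u v
  have s1 := fun c a b => shift_support (F (n + 1)) (F_support (n + 1)) c a b
  have s0 := fun c a b => shift_support (F n) (F_support n) c a b
  have t1 : ∀ c a b, ∑ᶠ p : ℤ × ℤ, c * F (n + 1) (p.1 - a, p.2 - b) = c * R (n + 1) := by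
    intro c a b
    rw [R, ← shift_finsum (F (n + 1)) a b, ← smul_eq_mul, smul_finsum]
    rfl
  have t0 : ∀ c a b, ∑ᶠ p : ℤ × ℤ, c * F n (p.1 - a, p.2 - b) = c * R n := by
    intro c a b
    rw [R, ← shift_finsum (F n) a b, ← smul_eq_mul, smul_finsum]
    rfl
  rw [R, finsum_congr key, finsum_add_distrib, finsum_add_distrib, finsum_add_distrib,
    t1, t1, t1, t0]
  · ring
  · exact s1 _ _ _
  · exact s1 _ _ _
  · exact ((s1 _ _ _).union (s1 _ _ _)).subset (Function.support_add _ _)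
  · exact s1 _ _ _
  · exact (((s1 _ _ _).union (s1 _ _ _)).subset (Function.support_add _ _)
      |>.union (s1 _ _ _)).subset (Function.support_add _ _)
  · exact s0 _ _ _

lemma ipoch_zero (x : K3) : ipoch x 0 = 1 := by simp [ipoch, pochK]

lemma R_zero : R 0 = 1 := by
  rw [R, finsum_eq_single _ (0, 0)]
  · simp [F, ex, ipoch_zero, pochK]
  · rintro ⟨u, v⟩ h
    unfold F
    simp only
    by_cases hu : u < 0
    · rw [ipoch_neg _ u hu]; ring
    by_cases hv : v < 0
    · rw [ipoch_neg _ v hv]; ring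
    have : ¬ (u = 0 ∧ v = 0) := by rintro ⟨rfl, rfl⟩; exact h rfl
    rw [ipoch_neg _ (((0 : ℕ) : ℤ) - u - v) (by push_cast; omega)]; ring

lemma R_one : R 1 = 1 + Av * qv + Bv * qv ^ 2 := by
  have h1 : ipoch (qv ^ 3) 1 = (1 - qv ^ 3)⁻¹ := by simp [ipoch, pochK]
  have h2 := one_sub_qv_pow 3 (by norm_num)
  rw [R, finsum_eq_sum_of_support_subset (s := {((0 : ℤ), (0 : ℤ)), (1, 0), (0, 1)})]
  · rw [Finset.sum_insert (by simp), Finset.sum_insert (by simp), Finset.sum_singleton]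
    simp [F, ex, ipoch_zero, pochK, h1, h2]
    norm_cast
    ring
  · rintro ⟨u, v⟩ h
    by_contra hc
    apply h
    unfold F
    simp only
    by_cases hu : u < 0
    · rw [ipoch_neg _ u hu]; ring
    by_cases hv : v < 0
    · rw [ipoch_neg _ v hv]; ring
    simp at hc
    rw [ipoch_neg _ (((1 : ℕ) : ℤ) - u - v) (by push_cast; omega)]; ring

lemma schurG_eq_R (n : ℕ) : schurG (3 * n - 1) = R n ∧ schurG (3 * (n + 1) - 1) = R (n + 1) := by
  induction n with
  | zero =>
    refine ⟨by simpa [R_zero] using schurG_zero, ?_⟩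
    have h1 := schurG_1 0
    have h2 := schurG_2 0
    simp [schurG_zero] at h1 h2
    simp [R_one, h1, h2]
  | succ n ih =>
    refine ⟨ih.2, ?_⟩
    rw [show n + 1 + 1 = n + 2 from rfl, schurG_rec, R_rec, ih.1, ih.2]

lemma rhs_eq_R (L : ℕ) :
    ∑ᶠ (τ : ℤ), Av ^ τ * qv ^ (τ * (3 * τ - 1) / 2) * qTrinomialAB (qv ^ 3) (Av * Bv) L τ
      = R L := by
  have hq := qv_ne_zero
  have hA := Av_ne_zero
  let e : ℤ × ℤ ≃ ℤ × ℤ :=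
    { toFun := fun p => (p.2 + p.1, p.2)
      invFun := fun p => (p.1 - p.2, p.2)
      left_inv := fun p => by ext <;> simp
      right_inv := fun p => by ext <;> simp }
  have hs : (Function.support (fun p => F L (e p))).Finite :=
    (F_support L).preimage (f := e) e.injective.injOn
  rw [R, ← finsum_comp_equiv e, finsum_curry _ hs]
  apply finsum_congr
  intro τ
  rw [qTrinomialAB, ← smul_eq_mul, smul_finsum]
  apply finsum_congr
  intro j
  rw [trinK_eq L _ _ _ (by ring)]
  have e1 : ex (j + τ) j = τ * (3 * τ - 1) / 2 + 3 * (j * (j + τ)) := by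
    obtain ⟨k, hk⟩ := even_ex τ
    have h := two_ex (j + τ) j
    rw [hk, Int.mul_ediv_cancel_left _ (by norm_num)]
    linarith
  have e2 : (L : ℤ) - (j + τ) - j = L - 2 * j - τ := by ring
  simp only [F, e, Equiv.coe_fn_mk, smul_eq_mul]
  rw [e1, e2, zpow_add₀ hq, zpow_add₀ hA, mul_zpow, zpow_mul qv 3]
  norm_cast
  ring

/-- The representation (5.16): for `L ≥ 1`, the generating function of partitions into
parts `≤ 3L - 1` satisfying the Schur gap conditions (consecutive parts differ by at
least 3, strictly more when the larger part is a multiple of 3), weighted by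
`A^{ν_1 + ν_0} B^{ν_2 + ν_0} q^{σ}`, equals
`∑_{τ ∈ ℤ} A^τ q^{τ(3τ-1)/2} (L; q³; τ)_{c = AB}`. -/
theorem schur_qtrinomial_representation (L : ℕ) (hL : 1 ≤ L) :
    (∑ᶠ π ∈ {π : List ℕ | (∀ x ∈ π, 0 < x ∧ x ≤ 3 * L - 1) ∧
        π.Chain' (fun x y => y + 3 ≤ x ∧ (x % 3 = 0 → y + 3 < x))},
      Av ^ (nu3 1 π + nu3 0 π) * Bv ^ (nu3 2 π + nu3 0 π) * qv ^ π.sum) =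
    ∑ᶠ (τ : ℤ), Av ^ τ * qv ^ (τ * (3 * τ - 1) / 2) * qTrinomialAB (qv ^ 3) (Av * Bv) L τ := by
  rw [rhs_eq_R, ← (schurG_eq_R L).1]
  unfold schurG
  have : {π : List ℕ | (∀ x ∈ π, 0 < x ∧ x ≤ 3 * L - 1) ∧
        π.Chain' (fun x y => y + 3 ≤ x ∧ (x % 3 = 0 → y + 3 < x))} = schurSet (3 * L - 1) := by
    have : IsTrans ℕ schurRel := ⟨fun a b c h1 h2 => by unfold schurRel at *; omega⟩
    ext π
    simp only [schurSet, Set.mem_setOf_eq]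
    rw [← List.isChain_iff_pairwise]
    rfl
  rw [this]
  rfl
end
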